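/- Fix T > 0. There is a constant C depending only on T such that for all R > 0, all 0 ≤ s < t ≤ T, all r ∈ [0, t) and all y ∈ ℝ², |φ_{t,R}(r,y) − φ_{s,R}(r,y)| ≤ C √(t−s) · 𝟙{‖y‖ ≤ R + t}, with the convention that φ_{s,R}(r,y) = 0 whenever r ≥ s. -/

import Mathlib

/-!
The difference of the integrals over `B_R` is at most the `L¹(ℝ²)` distance of `G b` and `G a`,
where `a = s - r ≤ b = t - r`. Let `0 ≤ a`. Inside the ball of radius `a` the kernel decreases in
time, `G b ≤ G a`, and outside it `G a = 0`. Hence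
`|G b - G a| = G a - G b + 2 G b 𝟙{‖x‖ ≥ a}`. In polar coordinates `G b` has mass `√(b² - a²)`
outside that ball, and in particular total mass `b`, so the distance is `2 √(b² - a²) - (b - a)`,
which is `O(√(b - a))` for bounded `b`. If `a < 0`, then `G a = G 0` and `b ≤ b - a`.
-/

open MeasureTheory Real

noncomputable section

/-- `ℝ²` with the Euclidean norm. -/
abbrev E2 : Type := EuclideanSpace ℝ (Fin 2)

/-- The fundamental solution of the 2D wave equation (in particular `G_t ≡ 0` for `t ≤ 0`). -/
def G (t : ℝ) (x : E2) : ℝ :=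
  if ‖x‖ < t then (2 * π * Real.sqrt (t ^ 2 - ‖x‖ ^ 2))⁻¹ else 0

/-- `φ_{t,R}(r,y) = ∫_{B_R} G_{t-r}(x-y) dx`. Since `G_{t-r} ≡ 0` when `r ≥ t`, this
automatically realizes the convention `φ_{s,R}(r,y) = 0` for `r ≥ s`. -/
def phi (t R r : ℝ) (y : E2) : ℝ :=
  ∫ x in Metric.closedBall (0 : E2) R, G (t - r) (x - y)

section General

open Metric Set

lemma setIntegral_compl_ball_fun_norm_addHaar {E F : Type*} [NormedAddCommGroup E]
    [NormedSpace ℝ E] [FiniteDimensional ℝ E] [Nontrivial E] [MeasurableSpace E] [BorelSpace E]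
    [NormedAddCommGroup F] [NormedSpace ℝ F] (μ : Measure E) [μ.IsAddHaarMeasure] (f : ℝ → F)
    {a : ℝ} (ha : 0 ≤ a) :
    ∫ x in (ball 0 a)ᶜ, f ‖x‖ ∂μ =
      Module.finrank ℝ E • μ.real (ball 0 1) •
        ∫ ρ in Ioi a, ρ ^ (Module.finrank ℝ E - 1) • f ρ := by
  have h_indicator : (ball (0 : E) a)ᶜ.indicator (fun x => f ‖x‖) =
      fun x => (Ici a).indicator f ‖x‖ := by
    ext x
    simp only [indicator, mem_compl_iff, mem_ball_zero_iff, not_lt, mem_Ici]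
  have h_inter : (Ioi 0 ∩ Ici a : Set ℝ) =ᵐ[volume] Ioi a := by
    have h_eq : Ioi 0 ∩ Ioi a = Ioi a := inter_eq_right.2 (Ioi_subset_Ioi ha)
    simpa only [h_eq] using (ae_eq_refl (Ioi (0 : ℝ))).inter (Ioi_ae_eq_Ici (a := a)).symm
  rw [← integral_indicator measurableSet_ball.compl, h_indicator,
    integral_fun_norm_addHaar μ ((Ici a).indicator f)]
  simp_rw [← indicator_smul_apply (Ici a) (fun ρ : ℝ => ρ ^ (Module.finrank ℝ E - 1)) f]
  rw [setIntegral_indicator measurableSet_Ici, setIntegral_congr_set h_inter]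

lemma norm_setIntegral_sub_setIntegral_le {α F : Type*} [MeasurableSpace α] [NormedAddCommGroup F]
    [NormedSpace ℝ F] {μ : Measure α} {f g : α → F} (hf : Integrable f μ) (hg : Integrable g μ)
    (A : Set α) :
    ‖(∫ x in A, f x ∂μ) - ∫ x in A, g x ∂μ‖ ≤ ∫ x, ‖f x - g x‖ ∂μ :=
  calc ‖(∫ x in A, f x ∂μ) - ∫ x in A, g x ∂μ‖
      = ‖∫ x in A, (f x - g x) ∂μ‖ := by rw [integral_sub hf.integrableOn hg.integrableOn]
    _ ≤ ∫ x in A, ‖f x - g x‖ ∂μ := norm_integral_le_integral_norm _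
    _ ≤ ∫ x, ‖f x - g x‖ ∂μ :=
        setIntegral_le_integral (hf.sub hg).norm (ae_of_all _ fun _ => norm_nonneg _)

end General

section RadialIntegral

variable {a b : ℝ}

lemma hasDerivAt_neg_sqrt_sq_sub_sq {ρ : ℝ} (hρ : b ^ 2 - ρ ^ 2 ≠ 0) :
    HasDerivAt (fun ρ : ℝ => -√(b ^ 2 - ρ ^ 2)) (ρ / √(b ^ 2 - ρ ^ 2)) ρ := by
  have h_sub : HasDerivAt (fun ρ : ℝ => b ^ 2 - ρ ^ 2) (-(2 * ρ)) ρ := by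
    simpa using (hasDerivAt_pow 2 ρ).const_sub (b ^ 2)
  have h_neg_sqrt := (h_sub.sqrt hρ).neg
  rwa [neg_div, neg_neg, mul_div_mul_left _ _ two_ne_zero] at h_neg_sqrt

lemma hasDerivAt_neg_sqrt_sq_sub_sq_of_mem_Ioo (ha : 0 ≤ a) :
    ∀ ρ ∈ Set.Ioo a b,
      HasDerivAt (fun ρ : ℝ => -√(b ^ 2 - ρ ^ 2)) (ρ / √(b ^ 2 - ρ ^ 2)) ρ := fun _ hρ =>
  hasDerivAt_neg_sqrt_sq_sub_sq
    (sub_pos.2 (pow_lt_pow_left₀ hρ.2 (ha.trans hρ.1.le) two_ne_zero)).ne'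

lemma integrableOn_Ioc_div_sqrt_sq_sub_sq (ha : 0 ≤ a) :
    IntegrableOn (fun ρ : ℝ => ρ / √(b ^ 2 - ρ ^ 2)) (Set.Ioc a b) :=
  intervalIntegral.integrableOn_deriv_of_nonneg (by fun_prop)
    (hasDerivAt_neg_sqrt_sq_sub_sq_of_mem_Ioo ha)
    fun _ hρ => div_nonneg (ha.trans hρ.1.le) (Real.sqrt_nonneg _)

lemma integral_Ioc_div_sqrt_sq_sub_sq (ha : 0 ≤ a) (hab : a ≤ b) :
    ∫ ρ in Set.Ioc a b, ρ / √(b ^ 2 - ρ ^ 2) = √(b ^ 2 - a ^ 2) := by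
  rw [← intervalIntegral.integral_of_le hab,
    intervalIntegral.integral_eq_sub_of_hasDerivAt_of_le hab (by fun_prop)
      (hasDerivAt_neg_sqrt_sq_sub_sq_of_mem_Ioo ha)
      ((intervalIntegrable_iff_integrableOn_Ioc_of_le hab).2
        (integrableOn_Ioc_div_sqrt_sq_sub_sq ha))]
  simp

-- Past `ρ = b` the integrand is a division by `√(negative) = 0`, hence `0`.
lemma div_sqrt_sq_sub_sq_eq_zero_of_mem_Ioi_sdiff_Ioc (hb : 0 ≤ b) :
    ∀ ρ ∈ Set.Ioi a \ Set.Ioc a b, ρ / √(b ^ 2 - ρ ^ 2) = 0 := by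
  intro ρ hρ
  have hbρ : b < ρ := not_le.1 fun h => hρ.2 ⟨hρ.1, h⟩
  rw [Real.sqrt_eq_zero_of_nonpos (sub_nonpos.2 (pow_le_pow_left₀ hb hbρ.le 2)), div_zero]

lemma integrableOn_Ioi_div_sqrt_sq_sub_sq (ha : 0 ≤ a) (hb : 0 ≤ b) :
    IntegrableOn (fun ρ : ℝ => ρ / √(b ^ 2 - ρ ^ 2)) (Set.Ioi a) :=
  (integrableOn_Ioc_div_sqrt_sq_sub_sq ha).of_forall_sdiff_eq_zero measurableSet_Ioi
    (div_sqrt_sq_sub_sq_eq_zero_of_mem_Ioi_sdiff_Ioc hb)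

lemma integral_Ioi_div_sqrt_sq_sub_sq (ha : 0 ≤ a) (hab : a ≤ b) :
    ∫ ρ in Set.Ioi a, ρ / √(b ^ 2 - ρ ^ 2) = √(b ^ 2 - a ^ 2) := by
  rw [setIntegral_eq_of_subset_of_forall_sdiff_eq_zero measurableSet_Ioi Set.Ioc_subset_Ioi_self
    (div_sqrt_sq_sub_sq_eq_zero_of_mem_Ioi_sdiff_Ioc (ha.trans hab)),
    integral_Ioc_div_sqrt_sq_sub_sq ha hab]

end RadialIntegral

section Kernel

variable {a b : ℝ} {x : E2}

lemma G_of_le_norm (h : b ≤ ‖x‖) : G b x = 0 :=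
  if_neg h.not_gt

lemma G_nonneg (b : ℝ) (x : E2) : 0 ≤ G b x := by
  unfold G
  split_ifs <;> positivity

lemma G_of_nonpos (hb : b ≤ 0) : G b = 0 :=
  funext fun x => G_of_le_norm (hb.trans (norm_nonneg x))

lemma G_max_zero (a : ℝ) : G (max a 0) = G a := by
  rcases le_total a 0 with ha | ha
  · rw [max_eq_right ha, G_of_nonpos ha, G_of_nonpos le_rfl]
  · rw [max_eq_left ha]

-- No case distinction is needed: for `b ≤ ‖x‖` the right-hand side is `0⁻¹ = 0`.
lemma G_of_nonneg (hb : 0 ≤ b) (x : E2) : G b x = (2 * π * √(b ^ 2 - ‖x‖ ^ 2))⁻¹ := by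
  rcases lt_or_ge ‖x‖ b with hx | hx
  · exact if_pos hx
  · rw [G_of_le_norm hx,
      Real.sqrt_eq_zero_of_nonpos (sub_nonpos.2 (pow_le_pow_left₀ hb hx 2)), mul_zero, inv_zero]

lemma G_le_G_of_norm_lt (hab : a ≤ b) (hx : ‖x‖ < a) : G b x ≤ G a x := by
  have hsq : 0 < a ^ 2 - ‖x‖ ^ 2 :=
    sub_pos.2 (pow_lt_pow_left₀ hx (norm_nonneg x) two_ne_zero)
  have ha : 0 ≤ a := (norm_nonneg x).trans hx.le
  rw [G_of_nonneg ha, G_of_nonneg (ha.trans hab)]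
  gcongr

lemma abs_G_sub (hab : a ≤ b) (x : E2) :
    |G b x - G a x| = G a x - G b x + 2 * (Metric.ball 0 a)ᶜ.indicator (G b) x := by
  rcases lt_or_ge ‖x‖ a with hx | hx
  · have hx_mem : x ∈ Metric.ball 0 a := mem_ball_zero_iff.2 hx
    rw [abs_of_nonpos (sub_nonpos.2 (G_le_G_of_norm_lt hab hx)),
      Set.indicator_of_notMem (Set.notMem_compl_iff.2 hx_mem)]
    ring
  · have hx_notMem : x ∉ Metric.ball 0 a := fun h => hx.not_gt (mem_ball_zero_iff.1 h)
    rw [G_of_le_norm hx, sub_zero, abs_of_nonneg (G_nonneg b x),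
      Set.indicator_of_mem (Set.mem_compl hx_notMem)]
    ring

lemma pow_finrank_sub_one_smul_inv_two_pi_mul (ρ c : ℝ) :
    ρ ^ (Module.finrank ℝ E2 - 1) • (2 * π * c)⁻¹ = (2 * π)⁻¹ * (ρ / c) := by
  rw [finrank_euclideanSpace_fin, smul_eq_mul, mul_inv, div_eq_mul_inv]
  ring

lemma integrable_G (b : ℝ) : Integrable (G b) := by
  rcases le_total b 0 with hb | hb
  · rw [G_of_nonpos hb]
    exact integrable_zero _ _ _
  · simp_rw [funext (G_of_nonneg hb)]
    rw [integrable_fun_norm_addHaar volume (f := fun ρ => (2 * π * √(b ^ 2 - ρ ^ 2))⁻¹)]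
    simp_rw [pow_finrank_sub_one_smul_inv_two_pi_mul]
    exact (integrableOn_Ioi_div_sqrt_sq_sub_sq le_rfl hb).const_mul _

lemma setIntegral_compl_ball_G (ha : 0 ≤ a) (hab : a ≤ b) :
    ∫ x in (Metric.ball 0 a)ᶜ, G b x = √(b ^ 2 - a ^ 2) := by
  have h_area : volume.real (Metric.ball (0 : E2) 1) = π := by
    simp [Measure.real, EuclideanSpace.volume_ball_fin_two, Real.pi_pos.le]
  simp_rw [G_of_nonneg (ha.trans hab)]
  rw [setIntegral_compl_ball_fun_norm_addHaar volume (fun ρ => (2 * π * √(b ^ 2 - ρ ^ 2))⁻¹) ha]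
  simp_rw [pow_finrank_sub_one_smul_inv_two_pi_mul]
  rw [integral_const_mul, integral_Ioi_div_sqrt_sq_sub_sq ha hab, h_area,
    finrank_euclideanSpace_fin, nsmul_eq_mul, smul_eq_mul]
  field_simp
  norm_num

lemma integral_G (hb : 0 ≤ b) : ∫ x, G b x = b := by
  simpa [Real.sqrt_sq hb] using setIntegral_compl_ball_G le_rfl hb

lemma integral_abs_G_sub (ha : 0 ≤ a) (hab : a ≤ b) :
    ∫ x, |G b x - G a x| = 2 * √(b ^ 2 - a ^ 2) - (b - a) := by
  have h_meas : MeasurableSet (Metric.ball (0 : E2) a)ᶜ := Metric.isOpen_ball.measurableSet.compl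
  simp_rw [abs_G_sub hab]
  rw [integral_add (by exact (integrable_G a).sub (integrable_G b))
      (((integrable_G b).indicator h_meas).const_mul 2),
    integral_sub (integrable_G a) (integrable_G b), integral_const_mul, integral_indicator h_meas,
    integral_G ha, integral_G (ha.trans hab), setIntegral_compl_ball_G ha hab]
  ring

lemma integral_abs_G_sub_le (hab : a ≤ b) (hb : 0 ≤ b) :
    ∫ x, |G b x - G a x| ≤ 2 * √(2 * b * (b - a)) := by
  have h_max : max a 0 ≤ b := max_le hab hb
  have hsq : b ^ 2 - max a 0 ^ 2 ≤ 2 * b * (b - a) :=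
    calc b ^ 2 - max a 0 ^ 2 = (b + max a 0) * (b - max a 0) := sq_sub_sq _ _
      _ ≤ (b + b) * (b - a) := by
        gcongr
        exact le_max_left a 0
      _ = 2 * b * (b - a) := by ring
  calc ∫ x, |G b x - G a x| = 2 * √(b ^ 2 - max a 0 ^ 2) - (b - max a 0) := by
        rw [← G_max_zero a, integral_abs_G_sub (le_max_right a 0) h_max]
    _ ≤ 2 * √(b ^ 2 - max a 0 ^ 2) := sub_le_self _ (sub_nonneg.2 h_max)
    _ ≤ 2 * √(2 * b * (b - a)) := by gcongr

end Kernel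

lemma phi_eq_zero_of_lt_norm {t R r : ℝ} {y : E2} (hy : R + (t - r) < ‖y‖) : phi t R r y = 0 := by
  refine setIntegral_eq_zero_of_forall_eq_zero fun x hx => G_of_le_norm ?_
  have hxR : ‖x‖ ≤ R := mem_closedBall_zero_iff.1 hx
  linarith [norm_sub_norm_le y x, norm_sub_rev x y]

lemma abs_phi_sub_le_integral_abs_G_sub (s t R r : ℝ) (y : E2) :
    |phi t R r y - phi s R r y| ≤ ∫ x, |G (t - r) x - G (s - r) x| :=
  calc |phi t R r y - phi s R r y|
      ≤ ∫ x, |G (t - r) (x - y) - G (s - r) (x - y)| :=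
        norm_setIntegral_sub_setIntegral_le ((integrable_G (t - r)).comp_sub_right y)
          ((integrable_G (s - r)).comp_sub_right y) _
    _ = ∫ x, |G (t - r) x - G (s - r) x| :=
        integral_sub_right_eq_self (fun x => |G (t - r) x - G (s - r) x|) y

/-- For `T > 0` there is a constant `C` depending only on `T` such that for all `R > 0`,
`0 ≤ s < t ≤ T`, `r ∈ [0,t)` and `y ∈ ℝ²`,
`|φ_{t,R}(r,y) - φ_{s,R}(r,y)| ≤ C √(t-s) 𝟙{‖y‖ ≤ R+t}`. -/
theorem stmt_19 (T : ℝ) (hT : 0 < T) :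
    ∃ C : ℝ, ∀ (R s t r : ℝ) (y : E2), 0 < R → 0 ≤ s → s < t → t ≤ T → 0 ≤ r → r < t →
      |phi t R r y - phi s R r y| ≤
        C * Real.sqrt (t - s) * (if ‖y‖ ≤ R + t then 1 else 0) := by
  refine ⟨2 * √(2 * T), fun R s t r y _ _ hst htT hr hrt => ?_⟩
  by_cases hy : ‖y‖ ≤ R + t
  · rw [if_pos hy, mul_one]
    calc |phi t R r y - phi s R r y|
        ≤ ∫ x, |G (t - r) x - G (s - r) x| := abs_phi_sub_le_integral_abs_G_sub s t R r y
      _ ≤ 2 * √(2 * (t - r) * ((t - r) - (s - r))) :=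
          integral_abs_G_sub_le (sub_le_sub_right hst.le r) (sub_nonneg.2 hrt.le)
      _ ≤ 2 * √(2 * T * (t - s)) := by
          rw [sub_sub_sub_cancel_right]
          gcongr
          exact (sub_le_self t hr).trans htT
      _ = 2 * √(2 * T) * √(t - s) := by rw [Real.sqrt_mul (by positivity), mul_assoc]
  · rw [if_neg hy, phi_eq_zero_of_lt_norm (by linarith), phi_eq_zero_of_lt_norm (by linarith)]
    simp
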